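/- Let X be a metric space satisfying assumptions (A), and let Ω, Ω' ⊊ X be bounded domains that are locally connected at the boundary. If f : Ω → Ω' is a surjective η-quasisymmetric homeomorphism, then f belongs to the class F(Ω, Ω'). -/

import Mathlib

open Set Metric Filter Bornology
open scoped ENNReal Topology

noncomputable section

/-- A metric space is doubling if there is `N` such that every ball of radius `r`
can be covered by at most `N` balls of radius `r/2`. -/
def DoublingSpace (X : Type*) [MetricSpace X] : Prop :=
  ∃ N : ℕ, ∀ (x : X) (r : ℝ), ∃ t : Finset X,
    t.card ≤ N ∧ Metric.ball x r ⊆ ⋃ y ∈ t, Metric.ball y (r / 2)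

/-- A metric space is quasiconvex if there is `C ≥ 1` such that any two points are
joined by a rectifiable curve of length at most `C · d(x,y)`. -/
def QuasiconvexSpace (X : Type*) [MetricSpace X] : Prop :=
  ∃ C : ℝ, 1 ≤ C ∧ ∀ x y : X, ∃ γ : ℝ → X,
    ContinuousOn γ (Set.Icc 0 1) ∧ γ 0 = x ∧ γ 1 = y ∧
    eVariationOn γ (Set.Icc 0 1) ≤ ENNReal.ofReal (C * dist x y)

/-- Assumptions (A): complete, doubling and quasiconvex. -/
def AssumptionsA (X : Type*) [MetricSpace X] : Prop :=
  CompleteSpace X ∧ DoublingSpace X ∧ QuasiconvexSpace X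

/-- A domain: a nonempty open connected subset. -/
def IsDomainIn {X : Type*} [MetricSpace X] (Ω : Set X) : Prop :=
  IsOpen Ω ∧ IsConnected Ω

/-- The inner diameter distance `dist_{M'}` between `E, F ⊆ Ω`: the infimum of diameters of
rectifiable curves in `Ω` joining `E` and `F` (the infimum of the empty set being `∞`). -/
def innerDiamDist {X : Type*} [MetricSpace X] (Ω E F : Set X) : ℝ≥0∞ :=
  ⨅ (γ : ℝ → X) (_ : ContinuousOn γ (Set.Icc 0 1) ∧ γ '' Set.Icc 0 1 ⊆ Ω ∧
      eVariationOn γ (Set.Icc 0 1) < ⊤ ∧ γ 0 ∈ E ∧ γ 1 ∈ F),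
    EMetric.diam (γ '' Set.Icc 0 1)

/-- The Mazurkiewicz distance `dist_M` between `A, B ⊆ Ω`: the infimum of diameters of
connected subsets of `Ω` meeting both `A` and `B`. -/
def mazDist {X : Type*} [MetricSpace X] (Ω A B : Set X) : ℝ≥0∞ :=
  ⨅ (K : Set X) (_ : K ⊆ Ω ∧ IsConnected K ∧ (K ∩ A).Nonempty ∧ (K ∩ B).Nonempty),
    EMetric.diam K

/-- An acceptable set in a bounded domain `Ω`: a bounded connected proper subset of `Ω`
whose closure meets `∂Ω`. -/
def AcceptableIn {X : Type*} [MetricSpace X] (Ω E : Set X) : Prop :=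
  Bornology.IsBounded E ∧ IsConnected E ∧ E ⊆ Ω ∧ E ≠ Ω ∧
    (closure E ∩ frontier Ω).Nonempty

/-- A chain in `Ω`. -/
def IsChainIn {X : Type*} [MetricSpace X] (Ω : Set X) (E : ℕ → Set X) : Prop :=
  (∀ k, AcceptableIn Ω (E k)) ∧
  (∀ k, E (k + 1) ⊆ E k) ∧
  (∀ k, 0 < mazDist Ω (Ω ∩ frontier (E (k + 1))) (Ω ∩ frontier (E k))) ∧
  (⋂ k, closure (E k)) ⊆ frontier Ω

/-- The impression of a chain. -/
def impression {X : Type*} [MetricSpace X] (E : ℕ → Set X) : Set X :=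
  ⋂ k, closure (E k)

/-- A chain `E` divides a chain `F` if every member of `F` contains some member of `E`. -/
def ChainDivides {X : Type*} (E F : ℕ → Set X) : Prop :=
  ∀ k, ∃ l, E l ⊆ F k

/-- Two chains are equivalent if they divide each other. -/
def ChainEquiv {X : Type*} (E F : ℕ → Set X) : Prop :=
  ChainDivides E F ∧ ChainDivides F E

/-- A chain represents a prime end if every chain dividing it is equivalent to it. -/
def IsPrimeChain {X : Type*} [MetricSpace X] (Ω : Set X) (E : ℕ → Set X) : Prop :=
  IsChainIn Ω E ∧ ∀ F : ℕ → Set X, IsChainIn Ω F → ChainDivides F E → ChainDivides E F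

/-- A chain represents a singleton prime end if moreover its impression is a single point. -/
def IsSingletonPrimeChain {X : Type*} [MetricSpace X] (Ω : Set X) (E : ℕ → Set X) : Prop :=
  IsPrimeChain Ω E ∧ ∃ x : X, impression E = {x}

/-- The bounded turning condition (linear connectedness): any two distinct points of `Ω` lie in a
continuum contained in `Ω` of diameter at most `L` times their distance. -/
def BoundedTurning {X : Type*} [MetricSpace X] (Ω : Set X) : Prop :=
  ∃ L : ℝ, 1 ≤ L ∧ ∀ x ∈ Ω, ∀ y ∈ Ω, x ≠ y → ∃ K : Set X,
    K ⊆ Ω ∧ IsCompact K ∧ IsConnected K ∧ K.Nontrivial ∧ x ∈ K ∧ y ∈ K ∧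
    Metric.diam K ≤ L * dist x y

/-- `Ω` is finitely connected at a boundary point `x`. -/
def FinitelyConnectedAt {X : Type*} [MetricSpace X] (Ω : Set X) (x : X) : Prop :=
  ∀ r : ℝ, 0 < r → ∃ U : Set X, IsOpen U ∧ Bornology.IsBounded U ∧ x ∈ U ∧
    U ⊆ Metric.ball x r ∧
    {C : Set X | ∃ y ∈ U ∩ Ω, C = connectedComponentIn (U ∩ Ω) y}.Finite

/-- `Ω` is finitely connected at the boundary. -/
def FinitelyConnectedAtBoundary {X : Type*} [MetricSpace X] (Ω : Set X) : Prop :=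
  ∀ x ∈ frontier Ω, FinitelyConnectedAt Ω x

/-- `Ω` is locally connected at a boundary point `x`. -/
def LocallyConnectedAt {X : Type*} [MetricSpace X] (Ω : Set X) (x : X) : Prop :=
  ∀ r : ℝ, 0 < r → ∃ U : Set X, IsOpen U ∧ Bornology.IsBounded U ∧ x ∈ U ∧
    U ⊆ Metric.ball x r ∧ IsConnected (U ∩ Ω)

/-- `Ω` is locally connected at the boundary. -/
def LocallyConnectedAtBoundary {X : Type*} [MetricSpace X] (Ω : Set X) : Prop :=
  ∀ x ∈ frontier Ω, LocallyConnectedAt Ω x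

/-- `f` is a homeomorphism of `Ω` onto `Ω'` with inverse `g`. -/
def IsHomeoBetween {X Y : Type*} [MetricSpace X] [MetricSpace Y] (f : X → Y) (g : Y → X)
    (Ω : Set X) (Ω' : Set Y) : Prop :=
  ContinuousOn f Ω ∧ ContinuousOn g Ω' ∧ Set.MapsTo f Ω Ω' ∧ Set.MapsTo g Ω' Ω ∧
  (∀ x ∈ Ω, g (f x) = x) ∧ (∀ y ∈ Ω', f (g y) = y)

/-- The class `F(Ω, Ω')`: homeomorphisms such that for all connected `E, F ⊊ Ω`,
`dist_{M'}(E,F) = 0` iff `dist_{M'}(f(E), f(F)) = 0`. -/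
def ClassF {X Y : Type*} [MetricSpace X] [MetricSpace Y] (Ω : Set X) (Ω' : Set Y)
    (f : X → Y) (g : Y → X) : Prop :=
  IsHomeoBetween f g Ω Ω' ∧
  ∀ E F : Set X, E ⊆ Ω → E ≠ Ω → IsConnected E → F ⊆ Ω → F ≠ Ω → IsConnected F →
    (innerDiamDist Ω E F = 0 ↔ innerDiamDist Ω' (f '' E) (f '' F) = 0)

/-- The cluster set `C(f, x)` of `f : Ω → Y` at `x`. -/
def clusterSetOn {X Y : Type*} [MetricSpace X] [MetricSpace Y] (f : X → Y) (Ω : Set X)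
    (x : X) : Set Y :=
  ⋂ U ∈ 𝓝 x, closure (f '' (U ∩ Ω))

/-!
Both sides of the equivalence are metric conditions in disguise. In a bounded domain that is locally
connected at its boundary, the inner diameter distance between `E` and `F` vanishes as soon as
`E` and `F` are not a positive distance apart: by compactness their closures then meet at some
`p ∈ closure Ω`, and arbitrarily small neighbourhoods of `p` have rectifiably connected traces on
`Ω`, because `p` is either interior or a boundary point at which `Ω` is locally connected. A
quasisymmetric embedding of a bounded set is uniformly continuous with uniformly continuous inverse
(compare with a third point far from the two given ones), so it preserves and reflects having
positive distance.
-/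

section RectifiableCurves

/-- Points `x` and `y` are joined by a rectifiable curve contained in `V`. The curve is encoded as a
`Path`, and its length is the variation of the extension to `ℝ`, as in `innerDiamDist`. -/
def RectifiablyJoinedIn {X : Type*} [PseudoEMetricSpace X] (V : Set X) (x y : X) : Prop :=
  ∃ γ : Path x y, range γ ⊆ V ∧ BoundedVariationOn γ.extend (Icc 0 1)

/-- Every point can be joined to all nearby points by rectifiable curves that stay near it: the
qualitative local form of quasiconvexity. -/
def LocallyRectifiablyConnected (X : Type*) [PseudoMetricSpace X] : Prop :=
  ∀ x : X, ∀ r > 0, ∀ᶠ y in 𝓝 x, RectifiablyJoinedIn (ball x r) x y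

namespace RectifiablyJoinedIn

variable {X : Type*} [PseudoEMetricSpace X] {V W : Set X} {x y z : X}

theorem mono (hVW : V ⊆ W) (h : RectifiablyJoinedIn V x y) : RectifiablyJoinedIn W x y :=
  let ⟨γ, hγV, hγ⟩ := h
  ⟨γ, hγV.trans hVW, hγ⟩

theorem symm (h : RectifiablyJoinedIn V x y) : RectifiablyJoinedIn V y x := by
  obtain ⟨γ, hγV, hγ⟩ := h
  refine ⟨γ.symm, γ.symm_range.trans_subset hγV, ne_top_of_le_ne_top hγ ?_⟩
  rw [γ.extend_symm]
  refine eVariationOn.comp_le_of_antitoneOn γ.extend (1 - ·) (fun _ _ _ _ h => by grind) ?_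
  exact fun t ht => by grind

theorem trans (hxy : RectifiablyJoinedIn V x y) (hyz : RectifiablyJoinedIn V y z) :
    RectifiablyJoinedIn V x z := by
  obtain ⟨γ, hγV, hγ⟩ := hxy
  obtain ⟨δ, hδV, hδ⟩ := hyz
  refine ⟨γ.trans δ, (γ.trans_range δ).trans_subset (union_subset hγV hδV), ?_⟩
  have first_half : eVariationOn (γ.trans δ).extend (Icc 0 (1 / 2)) ≤
      eVariationOn γ.extend (Icc 0 1) := by
    rw [eVariationOn.congr fun t ht => Path.extend_trans_of_le_half γ δ ht.2]
    exact eVariationOn.comp_le_of_monotoneOn γ.extend (2 * ·) (fun _ _ _ _ h => by grind)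
      fun t ht => by grind
  have second_half : eVariationOn (γ.trans δ).extend (Icc (1 / 2) 1) ≤
      eVariationOn δ.extend (Icc 0 1) := by
    rw [eVariationOn.congr fun t ht => Path.extend_trans_of_half_le γ δ ht.1]
    exact eVariationOn.comp_le_of_monotoneOn δ.extend (2 * · - 1) (fun _ _ _ _ h => by grind)
      fun t ht => by grind
  have split := eVariationOn.Icc_add_Icc (γ.trans δ).extend (s := univ) (a := 0) (b := 1 / 2)
    (c := 1) (by norm_num) (by norm_num) (mem_univ _)
  simp only [univ_inter] at split
  rw [BoundedVariationOn, ← split]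
  exact ENNReal.add_ne_top.2
    ⟨ne_top_of_le_ne_top hγ first_half, ne_top_of_le_ne_top hδ second_half⟩

end RectifiablyJoinedIn

theorem LocallyRectifiablyConnected.rectifiablyJoinedIn_of_isPreconnected {X : Type*}
    [PseudoMetricSpace X] (hX : LocallyRectifiablyConnected X) {V : Set X} (hVo : IsOpen V)
    (hVc : IsPreconnected V) {x y : X} (hx : x ∈ V) (hy : y ∈ V) :
    RectifiablyJoinedIn V x y := by
  refine hVc.induction₂ (RectifiablyJoinedIn V) (fun z hz => ?_)
    (fun _ _ _ _ _ _ => .trans) (fun _ _ _ _ => .symm) hx hy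
  obtain ⟨r, hr, hrV⟩ := Metric.isOpen_iff.1 hVo z hz
  exact nhdsWithin_le_nhds ((hX z r hr).mono fun _ => .mono hrV)

theorem QuasiconvexSpace.locallyRectifiablyConnected {X : Type*} [MetricSpace X]
    (hX : QuasiconvexSpace X) : LocallyRectifiablyConnected X := by
  obtain ⟨C, hC, hcurve⟩ := hX
  intro x r hr
  filter_upwards [ball_mem_nhds x (show 0 < r / C by positivity)] with y hy
  obtain ⟨γ, hγc, hγ0, hγ1, hγ⟩ := hcurve x y
  let p : Path x y := ⟨⟨_, hγc.domRestrict⟩, hγ0, hγ1⟩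
  have hp : EqOn p.extend γ (Icc 0 1) := fun t ht => p.extend_apply ht
  refine ⟨p, ?_, ?_⟩
  · rintro _ ⟨t, rfl⟩
    have hle := (eVariationOn.edist_le γ t.2 (left_mem_Icc.2 zero_le_one)).trans hγ
    rw [hγ0, edist_dist, ENNReal.ofReal_le_ofReal_iff (by positivity)] at hle
    refine mem_ball.2 (hle.trans_lt ?_)
    rwa [mul_comm, ← lt_div_iff₀ (by positivity), dist_comm]
  · rw [BoundedVariationOn, eVariationOn.congr hp]
    exact ne_top_of_le_ne_top ENNReal.ofReal_ne_top hγ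

end RectifiableCurves

section Doubling

variable {X : Type*} [MetricSpace X]

theorem DoublingSpace.exists_finite_ball_subset_iUnion (hX : DoublingSpace X) (n : ℕ) (x : X)
    (r : ℝ) : ∃ t : Set X, t.Finite ∧ ball x r ⊆ ⋃ y ∈ t, ball y (r / 2 ^ n) := by
  induction n generalizing x r with
  | zero => exact ⟨{x}, finite_singleton x, by simp⟩
  | succ n ih =>
    obtain ⟨N, hN⟩ := hX
    obtain ⟨t, -, ht⟩ := hN x r
    choose u hu_fin hu using fun y => ih y (r / 2)
    refine ⟨⋃ y ∈ t, u y, t.finite_toSet.biUnion fun y _ => hu_fin y, ht.trans ?_⟩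
    simp only [biUnion_iUnion]
    refine iUnion₂_mono fun y _ => ?_
    rw [pow_succ', ← div_div]
    exact hu y

theorem DoublingSpace.totallyBounded (hX : DoublingSpace X) {s : Set X} (hs : IsBounded s) :
    TotallyBounded s := by
  rcases s.eq_empty_or_nonempty with rfl | ⟨x, _⟩
  · exact totallyBounded_empty
  obtain ⟨r, hr⟩ := hs.subset_ball x
  refine Metric.totallyBounded_iff.2 fun ε hε => ?_
  have hlim : Tendsto (fun n : ℕ => r / 2 ^ n) atTop (𝓝 0) :=
    tendsto_const_nhds.div_atTop (tendsto_pow_atTop_atTop_of_one_lt one_lt_two)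
  obtain ⟨n, hn⟩ := (hlim.eventually_lt_const hε).exists
  obtain ⟨t, ht, hcover⟩ := hX.exists_finite_ball_subset_iUnion n x r
  exact ⟨t, ht, (hr.trans hcover).trans (iUnion₂_mono fun y _ => ball_subset_ball hn.le)⟩

theorem AssumptionsA.isCompact_closure (hX : AssumptionsA X) {s : Set X} (hs : IsBounded s) :
    IsCompact (closure s) :=
  have := hX.1
  (hX.2.1.totallyBounded hs).closure.isCompact_of_isClosed isClosed_closure

end Doubling

section Separation

theorem areSeparated_of_disjoint_closure {X : Type*} [PseudoEMetricSpace X] {E F : Set X}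
    (hE : IsCompact (closure E)) (hEF : Disjoint (closure E) (closure F)) : AreSeparated E F := by
  obtain ⟨r, hr, hlt⟩ := exists_pos_forall_lt_edist hE isClosed_closure hEF
  exact ⟨r, by positivity, fun x hx y hy => (hlt x (subset_closure hx) y (subset_closure hy)).le⟩

variable {X Y : Type*} [PseudoEMetricSpace X] [PseudoEMetricSpace Y]

theorem areSeparated_image_iff_of_isUniformInducing {f : X → Y} (hf : IsUniformInducing f)
    {E F : Set X} : AreSeparated (f '' E) (f '' F) ↔ AreSeparated E F := by
  obtain ⟨hf_cont, hf_inv⟩ := EMetric.isUniformInducing_iff.1 hf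
  constructor
  · rintro ⟨r, hr, hsep⟩
    obtain ⟨δ, hδ, hfδ⟩ := EMetric.uniformContinuous_iff.1 hf_cont r (pos_iff_ne_zero.2 hr)
    refine ⟨δ, hδ.ne', fun x hx y hy => le_of_not_gt fun hxy => ?_⟩
    exact (hfδ hxy).not_ge (hsep _ (mem_image_of_mem f hx) _ (mem_image_of_mem f hy))
  · rintro ⟨r, hr, hsep⟩
    obtain ⟨δ, hδ, hfδ⟩ := hf_inv r (pos_iff_ne_zero.2 hr)
    refine ⟨δ, hδ.ne', ?_⟩
    rintro _ ⟨x, hx, rfl⟩ _ ⟨y, hy, rfl⟩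
    exact le_of_not_gt fun hxy => (hfδ hxy).not_ge (hsep x hx y hy)

theorem areSeparated_image_iff_of_isUniformInducing_domRestrict {f : X → Y} {s E F : Set X}
    (hf : IsUniformInducing (s.domRestrict f)) (hE : E ⊆ s) (hF : F ⊆ s) :
    AreSeparated (f '' E) (f '' F) ↔ AreSeparated E F := by
  lift E to Set s using hE
  lift F to Set s using hF
  rw [areSeparated_image_iff_of_isUniformInducing (isUniformInducing_val s), image_image,
    image_image]
  exact areSeparated_image_iff_of_isUniformInducing hf

end Separation

section InnerDiameterDistance

variable {X : Type*} [MetricSpace X] {Ω E F : Set X}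

theorem innerDiamDist_le_ediam {V : Set X} (hV : V ⊆ Ω) {x y : X} (hx : x ∈ E) (hy : y ∈ F)
    (hxy : RectifiablyJoinedIn V x y) : innerDiamDist Ω E F ≤ ediam V := by
  obtain ⟨γ, hγV, hγ⟩ := hxy
  have himage : γ.extend '' Icc 0 1 = range γ := γ.image_extend_of_subset Subset.rfl
  exact (iInf₂_le (γ.extend : ℝ → X) ⟨γ.continuous_extend.continuousOn,
    himage.trans_subset (hγV.trans hV), hγ.lt_top, γ.extend_zero.symm ▸ hx,
    γ.extend_one.symm ▸ hy⟩).trans (ediam_mono (himage.trans_subset hγV))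

theorem innerDiamDist_ne_zero_of_areSeparated (h : AreSeparated E F) :
    innerDiamDist Ω E F ≠ 0 := by
  obtain ⟨r, hr, hsep⟩ := h
  refine (pos_iff_ne_zero.2 hr |>.trans_le (le_iInf₂ fun γ hγ => ?_)).ne'
  obtain ⟨-, -, -, hγ0, hγ1⟩ := hγ
  exact (hsep _ hγ0 _ hγ1).trans (edist_le_ediam_of_mem
    (mem_image_of_mem γ (left_mem_Icc.2 zero_le_one))
    (mem_image_of_mem γ (right_mem_Icc.2 zero_le_one)))

theorem LocallyConnectedAtBoundary.exists_mem_nhds_rectifiablyJoinedIn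
    (hΩlc : LocallyConnectedAtBoundary Ω) (hX : LocallyRectifiablyConnected X) (hΩ : IsOpen Ω)
    {p : X} (hp : p ∈ closure Ω) {r : ℝ} (hr : 0 < r) :
    ∃ U ∈ 𝓝 p, ∀ x ∈ U ∩ Ω, ∀ y ∈ U ∩ Ω, RectifiablyJoinedIn (Ω ∩ ball p r) x y := by
  by_cases hpΩ : p ∈ Ω
  · obtain ⟨s, hs, hsub⟩ :=
      Metric.isOpen_iff.1 (hΩ.inter isOpen_ball) p ⟨hpΩ, mem_ball_self hr⟩
    exact ⟨_, hX p s hs, fun x hx y hy => (hx.1.symm.trans hy.1).mono hsub⟩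
  · have hp_frontier : p ∈ frontier Ω := hΩ.frontier_eq ▸ ⟨hp, hpΩ⟩
    obtain ⟨U, hUo, -, hpU, hUr, hUc⟩ := hΩlc p hp_frontier r hr
    refine ⟨U, hUo.mem_nhds hpU, fun x hx y hy => ?_⟩
    exact (hX.rectifiablyJoinedIn_of_isPreconnected (hUo.inter hΩ) hUc.isPreconnected hx hy).mono
      fun z hz => ⟨hz.2, hUr hz.1⟩

theorem LocallyConnectedAtBoundary.innerDiamDist_eq_zero_of_mem_closure
    (hΩlc : LocallyConnectedAtBoundary Ω) (hX : LocallyRectifiablyConnected X) (hΩ : IsOpen Ω)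
    (hE : E ⊆ Ω) (hF : F ⊆ Ω) {p : X} (hpE : p ∈ closure E) (hpF : p ∈ closure F) :
    innerDiamDist Ω E F = 0 := by
  refine le_antisymm (ENNReal.le_of_forall_pos_le_add fun ε hε _ => ?_) zero_le
  obtain ⟨U, hU, hjoin⟩ := hΩlc.exists_mem_nhds_rectifiablyJoinedIn hX hΩ
    (closure_mono hE hpE) (NNReal.coe_pos.2 (half_pos hε))
  obtain ⟨x, hxU, hxE⟩ := mem_closure_iff_nhds.1 hpE U hU
  obtain ⟨y, hyU, hyF⟩ := mem_closure_iff_nhds.1 hpF U hU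
  calc innerDiamDist Ω E F
      ≤ ediam (Ω ∩ ball p (ε / 2 : NNReal)) :=
        innerDiamDist_le_ediam inter_subset_left hxE hyF
          (hjoin x ⟨hxU, hE hxE⟩ y ⟨hyU, hF hyF⟩)
    _ ≤ ediam (Metric.eball p (ε / 2 : NNReal)) :=
        ediam_mono (inter_subset_right.trans_eq Metric.eball_coe.symm)
    _ ≤ 2 * (ε / 2 : NNReal) := ediam_eball_le
    _ = 0 + ε := by rw [zero_add]; exact_mod_cast mul_div_cancel₀ ε two_ne_zero

theorem LocallyConnectedAtBoundary.innerDiamDist_eq_zero_iff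
    (hΩlc : LocallyConnectedAtBoundary Ω) (hX : LocallyRectifiablyConnected X) (hΩ : IsOpen Ω)
    (hΩc : IsCompact (closure Ω)) (hE : E ⊆ Ω) (hF : F ⊆ Ω) :
    innerDiamDist Ω E F = 0 ↔ ¬AreSeparated E F := by
  refine ⟨fun h hsep => innerDiamDist_ne_zero_of_areSeparated hsep h, fun hsep => ?_⟩
  have hEc : IsCompact (closure E) := hΩc.of_isClosed_subset isClosed_closure (closure_mono hE)
  obtain ⟨p, hpE, hpF⟩ := not_disjoint_iff.1 (mt (areSeparated_of_disjoint_closure hEc) hsep)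
  exact hΩlc.innerDiamDist_eq_zero_of_mem_closure hX hΩ hE hF hpE hpF

end InnerDiameterDistance

section Quasisymmetry

theorem half_dist_le_dist_or {X : Type*} [PseudoMetricSpace X] (p q x : X) :
    dist p q / 2 ≤ dist x p ∨ dist p q / 2 ≤ dist x q := by
  by_contra! h
  linarith [dist_triangle_left p q x]

/-- `f` is an `η`-quasisymmetric embedding of `s`. Injectivity is a separate field because the
distortion inequality is void at a triple whose denominator `dist (f x) (f b)` vanishes. -/
structure QuasisymmetricOn {X Y : Type*} [MetricSpace X] [MetricSpace Y] (η : ℝ → ℝ) (f : X → Y)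
    (s : Set X) : Prop where
  injOn : InjOn f s
  dist_div_dist_le : ∀ a ∈ s, ∀ b ∈ s, ∀ x ∈ s, a ≠ b → x ≠ a → x ≠ b →
    dist (f x) (f a) / dist (f x) (f b) ≤ η (dist x a / dist x b)

namespace QuasisymmetricOn

variable {X Y : Type*} [MetricSpace X] [MetricSpace Y] {η : ℝ → ℝ} {f : X → Y} {s : Set X}

theorem dist_le_mul (hf : QuasisymmetricOn η f s) (hη : MonotoneOn η (Ici 0)) {a b x : X}
    (ha : a ∈ s) (hb : b ∈ s) (hx : x ∈ s) (hab : a ≠ b) (hxa : x ≠ a) (hxb : x ≠ b) {t : ℝ}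
    (ht : dist x a ≤ t * dist x b) : dist (f x) (f a) ≤ η t * dist (f x) (f b) := by
  have hxb_pos : 0 < dist x b := dist_pos.2 hxb
  have hquot : dist x a / dist x b ≤ t := (div_le_iff₀ hxb_pos).2 ht
  have hquot_nonneg : 0 ≤ dist x a / dist x b := by positivity
  rw [← div_le_iff₀ (dist_pos.2 (hf.injOn.ne hx hb hxb))]
  exact (hf.dist_div_dist_le a ha b hb x hx hab hxa hxb).trans
    (hη hquot_nonneg (hquot_nonneg.trans hquot) hquot)

theorem isBounded_image (hf : QuasisymmetricOn η f s) (hη : MonotoneOn η (Ici 0))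
    (hs : IsBounded s) : IsBounded (f '' s) := by
  rcases s.subsingleton_or_nontrivial with hsub | ⟨p, hp, q, hq, hpq⟩
  · exact (hsub.finite.image f).isBounded
  set R := η (diam s / dist p q) * dist (f p) (f q)
  refine (((isBounded_closedBall (x := f p) (r := R)).insert (f q)).insert (f p)).subset ?_
  rintro _ ⟨x, hx, rfl⟩
  rcases eq_or_ne x p with rfl | hxp
  · exact mem_insert _ _
  rcases eq_or_ne x q with rfl | hxq
  · exact mem_insert_of_mem _ (mem_insert _ _)
  refine mem_insert_of_mem _ (mem_insert_of_mem _ ?_)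
  rw [mem_closedBall']
  refine hf.dist_le_mul hη hx hq hp hxq hxp.symm hpq ?_
  rw [div_mul_cancel₀ _ (dist_pos.2 hpq).ne']
  exact dist_le_diam_of_mem hs hp hx

theorem uniformContinuousOn (hf : QuasisymmetricOn η f s) (hη : MonotoneOn η (Ici 0))
    (hη0 : Tendsto η (𝓝[>] 0) (𝓝 0)) (hs : IsBounded s) : UniformContinuousOn f s := by
  refine Metric.uniformContinuousOn_iff.2 fun ε hε => ?_
  rcases s.subsingleton_or_nontrivial with hsub | hnt
  · exact ⟨1, one_pos, fun x hx y hy _ => by rwa [hsub hx hy, dist_self]⟩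
  have hfs : IsBounded (f '' s) := hf.isBounded_image hη hs
  have hM : 0 < diam (f '' s) := diam_pos (hnt.image_of_injOn hf.injOn) hfs
  obtain ⟨p, hp, q, hq, hpq⟩ := hnt
  obtain ⟨t, hηt, (ht : 0 < t)⟩ :=
    ((hη0.eventually_lt_const (div_pos hε hM)).and self_mem_nhdsWithin).exists
  have hc : 0 < dist p q / 2 := half_pos (dist_pos.2 hpq)
  refine ⟨min (dist p q / 2) (t * (dist p q / 2)), by positivity, fun x hx y hy hxy => ?_⟩
  obtain ⟨hxy_far, hxy_ratio⟩ := lt_min_iff.1 hxy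
  rcases eq_or_ne x y with rfl | hxy_ne
  · rwa [dist_self]
  obtain ⟨b, hb, hxb⟩ : ∃ b ∈ s, dist p q / 2 ≤ dist x b :=
    (half_dist_le_dist_or p q x).elim (⟨p, hp, ·⟩) (⟨q, hq, ·⟩)
  have hxb_ne : x ≠ b := dist_pos.1 (hc.trans_le hxb)
  have hyb_ne : y ≠ b := by rintro rfl; exact hxy_far.not_ge hxb
  have hfxb : 0 < dist (f x) (f b) := dist_pos.2 (hf.injOn.ne hx hb hxb_ne)
  calc dist (f x) (f y)
      ≤ η t * dist (f x) (f b) := hf.dist_le_mul hη hy hb hx hyb_ne hxy_ne hxb_ne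
        (hxy_ratio.le.trans (by gcongr))
    _ < ε / diam (f '' s) * dist (f x) (f b) := by gcongr
    _ ≤ ε / diam (f '' s) * diam (f '' s) := by
        gcongr
        exact dist_le_diam_of_mem hfs (mem_image_of_mem f hx) (mem_image_of_mem f hb)
    _ = ε := div_mul_cancel₀ _ hM.ne'

theorem exists_dist_lt_of_dist_map_lt (hf : QuasisymmetricOn η f s) (hη : MonotoneOn η (Ici 0))
    (hs : IsBounded s) {ε : ℝ} (hε : 0 < ε) :
    ∃ δ > 0, ∀ x ∈ s, ∀ y ∈ s, dist (f x) (f y) < δ → dist x y < ε := by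
  rcases s.subsingleton_or_nontrivial with hsub | ⟨p, hp, q, hq, hpq⟩
  · exact ⟨1, one_pos, fun x hx y hy _ => by rwa [hsub hx hy, dist_self]⟩
  set c := dist (f p) (f q) / 2
  have hc : 0 < c := half_pos (dist_pos.2 (hf.injOn.ne hp hq hpq))
  set K := max 1 (η (diam s / ε))
  have hK : 1 ≤ K := le_max_left _ _
  refine ⟨c / K, by positivity, fun x hx y hy hfxy => ?_⟩
  by_contra! hxy
  have hxy_ne : x ≠ y := dist_pos.1 (hε.trans_le hxy)
  obtain ⟨b, hb, hfxb⟩ : ∃ b ∈ s, c ≤ dist (f x) (f b) :=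
    (half_dist_le_dist_or (f p) (f q) (f x)).elim (⟨p, hp, ·⟩) (⟨q, hq, ·⟩)
  have hxb_ne : x ≠ b := by rintro rfl; rw [dist_self] at hfxb; exact hfxb.not_gt hc
  have hby_ne : b ≠ y := by rintro rfl; exact (hfxy.trans_le (div_le_self hc.le hK)).not_ge hfxb
  have hratio : dist x b ≤ diam s / ε * dist x y :=
    calc dist x b ≤ diam s := dist_le_diam_of_mem hs hx hb
      _ = diam s / ε * ε := (div_mul_cancel₀ _ hε.ne').symm
      _ ≤ diam s / ε * dist x y := by gcongr
  refine lt_irrefl c ?_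
  calc c ≤ dist (f x) (f b) := hfxb
    _ ≤ η (diam s / ε) * dist (f x) (f y) :=
        hf.dist_le_mul hη hb hy hx hby_ne hxb_ne hxy_ne hratio
    _ ≤ K * dist (f x) (f y) := by gcongr; exact le_max_right _ _
    _ < c := by rwa [← lt_div_iff₀' (by positivity)]

theorem isUniformInducing_domRestrict (hf : QuasisymmetricOn η f s) (hη : MonotoneOn η (Ici 0))
    (hη0 : Tendsto η (𝓝[>] 0) (𝓝 0)) (hs : IsBounded s) : IsUniformInducing (s.domRestrict f) := by
  refine Metric.isUniformInducing_iff.2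
    ⟨uniformContinuousOn_iff_restrict.1 (hf.uniformContinuousOn hη hη0 hs), fun ε hε => ?_⟩
  obtain ⟨δ, hδ, hfδ⟩ := hf.exists_dist_lt_of_dist_map_lt hη hs hε
  exact ⟨δ, hδ, fun {x y} => hfδ x x.2 y y.2⟩

end QuasisymmetricOn

end Quasisymmetry

theorem statement_13_general {X Y : Type*} [MetricSpace X] [MetricSpace Y]
    (hX : LocallyRectifiablyConnected X) (hY : LocallyRectifiablyConnected Y)
    {Ω : Set X} (hΩ : IsOpen Ω) (hΩc : IsCompact (closure Ω)) (hΩlc : LocallyConnectedAtBoundary Ω)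
    {Ω' : Set Y} (hΩ' : IsOpen Ω') (hΩ'c : IsCompact (closure Ω'))
    (hΩ'lc : LocallyConnectedAtBoundary Ω') {f : X → Y} (hfΩ : MapsTo f Ω Ω')
    {η : ℝ → ℝ} (hη : MonotoneOn η (Ici 0)) (hη0 : Tendsto η (𝓝[>] 0) (𝓝 0))
    (hf : QuasisymmetricOn η f Ω) {E F : Set X} (hE : E ⊆ Ω) (hF : F ⊆ Ω) :
    innerDiamDist Ω E F = 0 ↔ innerDiamDist Ω' (f '' E) (f '' F) = 0 := by
  have hΩb : IsBounded Ω := hΩc.isBounded.subset subset_closure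
  rw [hΩlc.innerDiamDist_eq_zero_iff hX hΩ hΩc hE hF,
    hΩ'lc.innerDiamDist_eq_zero_iff hY hΩ' hΩ'c (hfΩ.mono_left hE).image_subset
      (hfΩ.mono_left hF).image_subset,
    areSeparated_image_iff_of_isUniformInducing_domRestrict
      (hf.isUniformInducing_domRestrict hη hη0 hΩb) hE hF]

/-- a surjective `η`-quasisymmetric homeomorphism between bounded domains
locally connected at the boundary belongs to the class `F(Ω, Ω')`. -/
theorem statement_13 {X : Type*} [MetricSpace X] (hX : AssumptionsA X)
    (Ω : Set X) (hΩdom : IsDomainIn Ω) (hΩbdd : Bornology.IsBounded Ω)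
    (hΩne : Ω ≠ Set.univ) (hΩlc : LocallyConnectedAtBoundary Ω)
    (Ω' : Set X) (hΩ'dom : IsDomainIn Ω') (hΩ'bdd : Bornology.IsBounded Ω')
    (hΩ'ne : Ω' ≠ Set.univ) (hΩ'lc : LocallyConnectedAtBoundary Ω')
    (f : X → X) (g : X → X) (hfg : IsHomeoBetween f g Ω Ω')
    (η : ℝ → ℝ) (hηcont : ContinuousOn η (Set.Ici 0)) (hη0 : η 0 = 0)
    (hηmono : StrictMonoOn η (Set.Ici 0)) (hηsurj : Set.SurjOn η (Set.Ici 0) (Set.Ici 0))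
    (hqs : ∀ a ∈ Ω, ∀ b ∈ Ω, ∀ x ∈ Ω, a ≠ b → x ≠ a → x ≠ b →
      dist (f x) (f a) / dist (f x) (f b) ≤ η (dist x a / dist x b)) :
    ClassF Ω Ω' f g := by
  have hX_curves := hX.2.2.locallyRectifiablyConnected
  have hη_zero : Tendsto η (𝓝[>] 0) (𝓝 0) := by
    simpa only [hη0] using ((hηcont 0 self_mem_Ici).mono Ioi_subset_Ici_self).tendsto
  exact ⟨hfg, fun E F hE _ _ hF _ _ => statement_13_general hX_curves hX_curves
    hΩdom.1 (hX.isCompact_closure hΩbdd) hΩlc hΩ'dom.1 (hX.isCompact_closure hΩ'bdd) hΩ'lc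
    hfg.2.2.1 hηmono.monotoneOn hη_zero ⟨LeftInvOn.injOn hfg.2.2.2.2.1, hqs⟩ hE hF⟩

end
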